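/- arXiv:1810.07369 — 2 statements merged into one kernel-verified Lean document; each statement's English description precedes it below -/
import Mathlib

section
/- Let f ∈ L¹(ℝ²) with ∫_{ℝ²} f dx = 0, and suppose there exist p₀ > 1 and β > 0 such that ∫_{ℝ²} |f(x)|^{p₀}(1+|x|)^{2βp₀ + 2(p₀-1)} dx < ∞. Then the Newtonian potential w(x) = -(1/2π)∫_{ℝ²} ln|x-y| f(y) dy is well-defined, continuous, and satisfies |w(x)| ≤ C |x|^{-2β/(1+2β)} ln|x| for all large |x|. -/
open MeasureTheory Real Filter
noncomputable section
abbrev E2 : Type := EuclideanSpace ℝ (Fin 2)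
/-- Classical Laplacian on ℝ². -/
def lap (u : E2 → ℝ) (x : E2) : ℝ :=
  ∑ i : Fin 2, fderiv ℝ (fun y => fderiv ℝ u y (EuclideanSpace.single i 1)) x (EuclideanSpace.single i 1)
/-- The set of admissible exponents α in the definition of α_p(K). -/
def alphaSet (K : E2 → ℝ) (p : ℝ) : Set ℝ :=
  {α : ℝ | Integrable (fun x : E2 => |K x| ^ p * (1 + ‖x‖) ^ (2*α*p + 2*(p-1)))}
/-- α_p(K), with the convention sup ∅ = -∞ (⊥ in `EReal`). -/
def alphaP (K : E2 → ℝ) (p : ℝ) : EReal :=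
  sSup ((fun a : ℝ => (a : EReal)) '' alphaSet K p)

/-!
Subtracting `log ‖x‖ * ∫ f = 0` replaces the kernel of the potential by `log ‖x - y‖ - log ‖x‖`.
Freezing the distance `‖x - y‖` from below at `‖x‖ / 2` leaves a kernel bounded by a multiple of
`(‖y‖ / ‖x‖) ^ τ` for every `0 < τ ≤ 1`, so the decay of that part is a moment bound on `f`, which
Hölder's inequality extracts from the weighted `L^p` hypothesis. The part removed by the freezing
is exactly `log⁺ (‖x‖ / 2 / ‖x - y‖)`. It lives on `‖y‖ ≥ ‖x‖ / 2`, where the weight is large, and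
by Hölder and scaling `∫ log⁺ (r / ‖x - y‖) * |g y| = O(r ^ (d / q))` uniformly in `x`, for `g` in
`L^p`, `q` conjugate to `p` and `d` the dimension. The same estimate as `r → 0` exhibits the
potential as a uniform limit of potentials with continuous kernels, hence its continuity.
Every rate `τ ≤ 1` below `2 * β` is reached this way, in particular `2 * β / (1 + 2 * β)`.
-/

open Module Asymptotics Bornology
open scoped ENNReal Topology

section Log

variable {a r s t u τ x : ℝ}

lemma log_max_sub_log_eq_posLog_div (ht : 0 < t) (hr : 0 < r) :
    log (max t r) - log t = log⁺ (r / t) := by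
  have hmax : max t r / t = max 1 (r / t) := by
    rw [← max_div_div_right ht.le, div_self ht.ne']
  rw [posLog_eq_log_max_one (by positivity), ← hmax,
    log_div (lt_max_of_lt_left ht).ne' ht.ne']

lemma abs_log_max_le_abs_log_add_posLog (hr : 0 < r) :
    |log (max t r)| ≤ |log r| + log⁺ t := by
  have hlog : log t ≤ log⁺ t := le_max_right _ _
  have hpos : 0 ≤ log⁺ t := posLog_nonneg
  rcases le_total t r with htr | hrt
  · simpa [max_eq_right htr] using hpos
  · have hrt' : log r ≤ log t := log_le_log hr hrt
    rw [max_eq_left hrt, abs_le]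
    exact ⟨by linarith [neg_abs_le (log r)], by linarith [abs_nonneg (log r)]⟩

lemma posLog_le_rpow_div (hx : 0 ≤ x) (ha : 0 < a) : log⁺ x ≤ x ^ a / a :=
  max_le (by positivity) (log_le_rpow_div hx ha)

lemma log_one_add_le_rpow_div (hu : 0 ≤ u) (hτ : 0 < τ) (hτ1 : τ ≤ 1) :
    log (1 + u) ≤ u ^ τ / τ := by
  rw [le_div_iff₀' hτ]
  calc τ * log (1 + u) = log ((1 + u) ^ τ) := (log_rpow (by positivity) τ).symm
    _ ≤ log (1 + u ^ τ) := by
      gcongr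
      simpa using rpow_add_le_add_rpow zero_le_one hu hτ.le hτ1
    _ ≤ u ^ τ := by linarith [log_le_sub_one_of_pos (by positivity : 0 < 1 + u ^ τ)]

lemma neg_log_le_two_mul_rpow (hs : 1 / 2 ≤ s) (hsu : 1 - s ≤ u) (hu : 0 ≤ u) (hτ : 0 ≤ τ)
    (hτ1 : τ ≤ 1) : -log s ≤ 2 * u ^ τ := by
  have hs0 : 0 < s := by linarith
  have hrpow : 0 ≤ u ^ τ := by positivity
  have hdefect : 1 - s ≤ u ^ τ := by
    rcases le_total u 1 with hu1 | hu1
    · exact hsu.trans (self_le_rpow_of_le_one hu hu1 hτ1)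
    · linarith [one_le_rpow hu1 hτ]
  have hinv : s⁻¹ ≤ 1 + 2 * u ^ τ := by
    rw [inv_le_iff_one_le_mul₀ hs0]
    nlinarith
  linarith [one_sub_inv_le_log_of_pos hs0]

lemma abs_log_le_rpow_of_half_le (hs : 1 / 2 ≤ s) (hsu : |s - 1| ≤ u) (hτ : 0 < τ)
    (hτ1 : τ ≤ 1) : |log s| ≤ 2 / τ * u ^ τ := by
  have hu : 0 ≤ u := (abs_nonneg _).trans hsu
  obtain ⟨hlower, hupper⟩ := abs_le.1 hsu
  refine abs_le'.2 ⟨?_, ?_⟩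
  · calc log s ≤ log (1 + u) := log_le_log (by linarith) (by linarith)
      _ ≤ 1 / τ * u ^ τ := by
        simpa only [one_div_mul_eq_div] using log_one_add_le_rpow_div hu hτ hτ1
      _ ≤ 2 / τ * u ^ τ := by gcongr; norm_num
  · calc -log s ≤ 2 * u ^ τ := neg_log_le_two_mul_rpow hs (by linarith) hu hτ.le hτ1
      _ ≤ 2 / τ * u ^ τ := by gcongr; exact le_div_self zero_le_two hτ hτ1

end Log

section LogKernel

variable {E : Type*} [NormedAddCommGroup E] {x y : E} {τ : ℝ}

lemma norm_log_max_norm_sub_mul_le {B r : ℝ} (hr : 0 < r) (hx : ‖x‖ ≤ B) (y : E) (c : ℝ) :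
    ‖log (max ‖x - y‖ r) * c‖ ≤
      (|log r| + log⁺ B + log 2) * |c| + |log⁺ ‖y‖ * c| := by
  have hkernel : |log (max ‖x - y‖ r)| ≤ |log r| + log⁺ B + log 2 + log⁺ ‖y‖ := by
    have hsub : log⁺ ‖x - y‖ ≤ log⁺ ‖x‖ + log⁺ ‖y‖ + log 2 := by
      simpa [sub_eq_add_neg] using posLog_norm_add_le x (-y)
    linarith [abs_log_max_le_abs_log_add_posLog (t := ‖x - y‖) hr,
      posLog_le_posLog (norm_nonneg x) hx]
  rw [norm_mul, norm_eq_abs, norm_eq_abs, abs_mul (log⁺ ‖y‖), abs_of_nonneg posLog_nonneg,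
    ← add_mul]
  gcongr

lemma abs_log_norm_sub_sub_log_norm_le (hxy : x ≠ y) (hx : x ≠ 0) (hτ : 0 < τ) (hτ1 : τ ≤ 1) :
    |log ‖x - y‖ - log ‖x‖| ≤
      2 / τ * (‖y‖ / ‖x‖) ^ τ + log⁺ (‖x‖ / 2 / ‖x - y‖) := by
  have hx0 : 0 < ‖x‖ := norm_pos_iff.2 hx
  have hd0 : 0 < ‖x - y‖ := norm_pos_iff.2 (sub_ne_zero.2 hxy)
  have htruncated : |log (max ‖x - y‖ (‖x‖ / 2) / ‖x‖)| ≤ 2 / τ * (‖y‖ / ‖x‖) ^ τ := by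
    refine abs_log_le_rpow_of_half_le ?_ ?_ hτ hτ1
    · rw [le_div_iff₀ hx0]
      linarith [le_max_right ‖x - y‖ (‖x‖ / 2)]
    · have hdist : |‖x - y‖ - ‖x‖| ≤ ‖y‖ := by
        simpa using abs_norm_sub_norm_le (x - y) x
      rw [div_sub_one hx0.ne', abs_div, abs_of_pos hx0]
      gcongr
      grind
  have hsplit : log ‖x - y‖ - log ‖x‖ =
      log (max ‖x - y‖ (‖x‖ / 2) / ‖x‖) - log⁺ (‖x‖ / 2 / ‖x - y‖) := by
    rw [← log_max_sub_log_eq_posLog_div hd0 (half_pos hx0),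
      log_div (lt_max_of_lt_left hd0).ne' hx0.ne']
    ring
  rw [hsplit]
  calc _ ≤ |log (max ‖x - y‖ (‖x‖ / 2) / ‖x‖)| + |log⁺ (‖x‖ / 2 / ‖x - y‖)| := abs_sub _ _
    _ ≤ _ := by
      rw [abs_of_nonneg posLog_nonneg]
      gcongr

lemma posLog_half_norm_div_le {s : ℝ} (hx : x ≠ 0) (hs : 0 ≤ s) :
    log⁺ (‖x‖ / 2 / ‖x - y‖) ≤
      (‖x‖ / 2) ^ (-s) * (log⁺ (‖x‖ / 2 / ‖x - y‖) * (1 + ‖y‖) ^ s) := by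
  have : 0 < ‖x‖ := norm_pos_iff.2 hx
  have hpos : 0 ≤ log⁺ (‖x‖ / 2 / ‖x - y‖) := posLog_nonneg
  rcases le_total (‖x‖ / 2) ‖x - y‖ with hfar | hnear
  · have hzero : log⁺ (‖x‖ / 2 / ‖x - y‖) = 0 := by
      rw [posLog_eq_zero_iff, abs_of_nonneg (by positivity)]
      exact div_le_one_of_le₀ hfar (norm_nonneg _)
    simp [hzero]
  · have hy : ‖x‖ / 2 ≤ 1 + ‖y‖ := by linarith [norm_sub_norm_le x y]
    have hweight : 1 ≤ (‖x‖ / 2) ^ (-s) * (1 + ‖y‖) ^ s := by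
      rw [rpow_neg (by positivity), inv_mul_eq_div, one_le_div (by positivity)]
      gcongr
    calc _ ≤ log⁺ (‖x‖ / 2 / ‖x - y‖) * ((‖x‖ / 2) ^ (-s) * (1 + ‖y‖) ^ s) :=
          le_mul_of_one_le_right hpos hweight
      _ = _ := by ring

lemma abs_log_norm_sub_sub_log_norm_mul_le {s : ℝ} (hxy : x ≠ y) (hx : x ≠ 0) (hτ : 0 < τ)
    (hτ1 : τ ≤ 1) (hs : 0 ≤ s) (c : ℝ) :
    |(log ‖x - y‖ - log ‖x‖) * c| ≤
      2 / τ * ‖x‖ ^ (-τ) * |(1 + ‖y‖) ^ τ * c| +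
        (‖x‖ / 2) ^ (-s) * (log⁺ (‖x‖ / 2 / ‖x - y‖) * |(1 + ‖y‖) ^ s * c|) := by
  have hfar : (‖y‖ / ‖x‖) ^ τ ≤ ‖x‖ ^ (-τ) * (1 + ‖y‖) ^ τ := by
    rw [div_rpow (norm_nonneg _) (norm_nonneg _), rpow_neg (norm_nonneg _), inv_mul_eq_div]
    gcongr
    linarith
  have habs (a : ℝ) : |(1 + ‖y‖) ^ a * c| = (1 + ‖y‖) ^ a * |c| := by
    rw [abs_mul, abs_of_nonneg (by positivity)]
  calc |(log ‖x - y‖ - log ‖x‖) * c|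
      ≤ (2 / τ * (‖y‖ / ‖x‖) ^ τ + log⁺ (‖x‖ / 2 / ‖x - y‖)) * |c| := by
        rw [abs_mul]
        gcongr
        exact abs_log_norm_sub_sub_log_norm_le hxy hx hτ hτ1
    _ ≤ (2 / τ * (‖x‖ ^ (-τ) * (1 + ‖y‖) ^ τ) +
          (‖x‖ / 2) ^ (-s) * (log⁺ (‖x‖ / 2 / ‖x - y‖) * (1 + ‖y‖) ^ s)) * |c| := by
        gcongr ?_ * |c|
        exact add_le_add (by gcongr) (posLog_half_norm_div_le hx hs)
    _ = _ := by
        rw [habs, habs]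
        ring

lemma posLog_div_norm_sub_eq [NormedSpace ℝ E] {r : ℝ} (hr : 0 ≤ r) (x y : E) :
    log⁺ (r / ‖x - y‖) = log⁺ ‖r⁻¹ • (x - y)‖⁻¹ := by
  rw [norm_smul, norm_of_nonneg (inv_nonneg.2 hr), mul_inv, inv_inv, div_eq_mul_inv]

lemma exists_abs_le_mul_log_norm_of_isBigO {u v : E → ℝ}
    (huv : u =O[cobounded E] v) (hv : 0 ≤ v) :
    ∃ C R : ℝ, 0 < C ∧ ∀ x, R ≤ ‖x‖ → |u x| ≤ C * v x * log ‖x‖ := by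
  obtain ⟨C, hC, hbound⟩ := huv.exists_pos
  obtain ⟨R, -, hR⟩ := hasBasis_cobounded_norm.eventually_iff.1 hbound.bound
  refine ⟨C, max R (exp 1), hC, fun x hx ↦ ?_⟩
  have hlog : 1 ≤ log ‖x‖ :=
    (le_log_iff_exp_le ((exp_pos 1).trans_le (le_of_max_le_right hx))).2 (le_of_max_le_right hx)
  calc |u x| ≤ C * v x := by
        simpa [abs_of_nonneg (hv x)] using hR (le_of_max_le_left hx)
    _ ≤ C * v x * log ‖x‖ := le_mul_of_one_le_right (mul_nonneg hC.le (hv x)) hlog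

end LogKernel

section Weights

variable {E : Type*} [NormedAddCommGroup E] [MeasurableSpace E] {μ : Measure E} {f : E → ℝ}
  {p s : ℝ}

lemma memLp_one_add_norm_rpow_mul_iff [OpensMeasurableSpace E]
    (hf : AEStronglyMeasurable f μ) (hp : 0 < p) :
    MemLp (fun y ↦ (1 + ‖y‖) ^ s * f y) (ENNReal.ofReal p) μ ↔
      Integrable (fun y ↦ |f y| ^ p * (1 + ‖y‖) ^ (s * p)) μ := by
  have hweight : Measurable fun y : E ↦ (1 + ‖y‖) ^ s := by fun_prop
  rw [← integrable_norm_rpow_iff (hweight.aestronglyMeasurable.fun_mul hf)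
      (by simpa using hp) (by simp),
    ENNReal.toReal_ofReal hp.le]
  refine integrable_congr (.of_forall fun y ↦ ?_)
  simp only
  rw [norm_mul, norm_eq_abs (f y), norm_of_nonneg (by positivity),
    mul_rpow (by positivity) (abs_nonneg _), ← rpow_mul (by positivity), mul_comm]

lemma memLp_of_memLp_one_add_norm_rpow_mul {m : ℝ≥0∞} (hf : AEStronglyMeasurable f μ)
    (hs : 0 ≤ s) (hfs : MemLp (fun y ↦ (1 + ‖y‖) ^ s * f y) m μ) : MemLp f m μ := by
  refine hfs.mono hf (.of_forall fun y ↦ ?_)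
  rw [norm_mul]
  refine le_mul_of_one_le_left (norm_nonneg _) ((one_le_rpow ?_ hs).trans (le_norm_self _))
  linarith [norm_nonneg y]

lemma integrable_posLog_norm_mul [OpensMeasurableSpace E] (hf : AEStronglyMeasurable f μ)
    (hs : 0 < s) (hfs : Integrable (fun y ↦ (1 + ‖y‖) ^ s * f y) μ) :
    Integrable (fun y ↦ log⁺ ‖y‖ * f y) μ := by
  have hkernel : Measurable fun y : E ↦ log⁺ ‖y‖ := by fun_prop
  refine (hfs.norm.const_mul s⁻¹).mono' (hkernel.aestronglyMeasurable.fun_mul hf)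
    (.of_forall fun y ↦ ?_)
  have hposLog : log⁺ ‖y‖ ≤ s⁻¹ * (1 + ‖y‖) ^ s :=
    calc log⁺ ‖y‖ ≤ log⁺ (1 + ‖y‖) := posLog_le_posLog (norm_nonneg y) (by linarith)
      _ ≤ (1 + ‖y‖) ^ s / s := posLog_le_rpow_div (by positivity) hs
      _ = _ := (inv_mul_eq_div _ _).symm
  rw [norm_mul, norm_mul, norm_of_nonneg posLog_nonneg,
    norm_of_nonneg (by positivity : 0 ≤ (1 + ‖y‖) ^ s), ← mul_assoc]
  gcongr

end Weights

section TruncatedLogPotential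

variable {E : Type*} [NormedAddCommGroup E] [MeasurableSpace E] {μ : Measure E} {f : E → ℝ}
  {r : ℝ}

/-- The logarithmic potential of `f` with respect to `μ`, without normalising constant: the
Newtonian potential of the plane is `-1 / (2π)` times it, for `μ` the Lebesgue measure. -/
def logPotential (μ : Measure E) (f : E → ℝ) (x : E) : ℝ :=
  ∫ y, log ‖x - y‖ * f y ∂μ

/-- The logarithmic potential with its kernel frozen at distance `r`, which removes the
singularity; it approximates `logPotential` uniformly as `r → 0`. -/
def truncatedLogPotential (μ : Measure E) (f : E → ℝ) (r : ℝ) (x : E) : ℝ :=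
  ∫ y, log (max ‖x - y‖ r) * f y ∂μ

lemma logPotential_eq_integral_sub_of_integral_eq_zero (hf : Integrable f μ)
    (hzero : ∫ y, f y ∂μ = 0) {x : E} (hlog : Integrable (fun y ↦ log ‖x - y‖ * f y) μ) :
    logPotential μ f x = ∫ y, (log ‖x - y‖ - log ‖x‖) * f y ∂μ := by
  simp_rw [sub_mul]
  rw [integral_sub hlog (hf.const_mul _), integral_const_mul, hzero, mul_zero, sub_zero,
    logPotential]

variable [OpensMeasurableSpace E]

lemma aestronglyMeasurable_log_max_norm_sub_mul (hf : AEStronglyMeasurable f μ) (r : ℝ) (x : E) :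
    AEStronglyMeasurable (fun y ↦ log (max ‖x - y‖ r) * f y) μ := by
  have hkernel : Measurable fun y : E ↦ log (max ‖x - y‖ r) :=
    measurable_log.comp (Continuous.measurable (by fun_prop))
  exact hkernel.aestronglyMeasurable.fun_mul hf

lemma integrable_log_max_norm_sub_mul (hf : Integrable f μ)
    (hlog : Integrable (fun y ↦ log⁺ ‖y‖ * f y) μ) (hr : 0 < r) (x : E) :
    Integrable (fun y ↦ log (max ‖x - y‖ r) * f y) μ :=
  ((hf.abs.const_mul _).add hlog.abs).mono'
    (aestronglyMeasurable_log_max_norm_sub_mul hf.1 r x)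
    (.of_forall fun y ↦ norm_log_max_norm_sub_mul_le hr le_rfl y (f y))

lemma continuous_truncatedLogPotential (hf : Integrable f μ)
    (hlog : Integrable (fun y ↦ log⁺ ‖y‖ * f y) μ) (hr : 0 < r) :
    Continuous (truncatedLogPotential μ f r) := by
  refine continuous_iff_continuousAt.2 fun x₀ ↦ continuousAt_of_dominated
    (.of_forall (aestronglyMeasurable_log_max_norm_sub_mul hf.1 r)) ?_
    ((hf.abs.const_mul (|log r| + log⁺ (‖x₀‖ + 1) + log 2)).add hlog.abs)
    (.of_forall fun y ↦ ?_)
  · filter_upwards [Metric.ball_mem_nhds x₀ one_pos] with x hx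
    exact .of_forall fun y ↦
      norm_log_max_norm_sub_mul_le hr (norm_lt_of_mem_ball hx).le y (f y)
  · have hmax : max ‖x₀ - y‖ r ≠ 0 := (lt_max_of_lt_right hr).ne'
    have hcont : ContinuousAt (fun x ↦ max ‖x - y‖ r) x₀ := by fun_prop
    exact (hcont.log hmax).mul continuousAt_const

end TruncatedLogPotential

section FiniteDimensional

variable {E : Type*} [NormedAddCommGroup E] [NormedSpace ℝ E] [FiniteDimensional ℝ E]
  [MeasurableSpace E] [BorelSpace E] {μ : Measure E} [μ.IsAddHaarMeasure] {f g : E → ℝ}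
  {p q r s τ : ℝ}

section Moments

lemma memLp_one_add_norm_rpow_neg (hq : 0 < q) (hs : finrank ℝ E / q < s) :
    MemLp (fun y : E ↦ (1 + ‖y‖) ^ (-s)) (ENNReal.ofReal q) μ := by
  have hmeas : Measurable fun y : E ↦ (1 + ‖y‖) ^ (-s) := by fun_prop
  rw [← integrable_norm_rpow_iff hmeas.aestronglyMeasurable (by simpa using hq) (by simp),
    ENNReal.toReal_ofReal hq.le]
  refine (integrable_one_add_norm ((div_lt_iff₀ hq).1 hs)).congr (.of_forall fun y ↦ ?_)
  simp only
  rw [norm_of_nonneg (by positivity), ← rpow_mul (by positivity), neg_mul]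

lemma integrable_one_add_norm_rpow_mul_of_memLp (hpq : p.HolderConjugate q)
    (hfs : MemLp (fun y ↦ (1 + ‖y‖) ^ s * f y) (ENNReal.ofReal p) μ)
    (hτ : τ + finrank ℝ E / q < s) : Integrable (fun y ↦ (1 + ‖y‖) ^ τ * f y) μ := by
  have := hpq.symm.ennrealOfReal
  have hweight : MemLp (fun y : E ↦ (1 + ‖y‖) ^ (-(s - τ))) (ENNReal.ofReal q) μ :=
    memLp_one_add_norm_rpow_neg hpq.symm.pos (by linarith)
  refine (hweight.integrable_mul hfs).congr (.of_forall fun y ↦ ?_)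
  rw [Pi.mul_apply, ← mul_assoc, ← rpow_add (by positivity)]
  congr 2
  ring

end Moments

section Convolution

lemma memLp_comp_smul_sub {m : ℝ≥0∞} (hg : MemLp g m μ) {c : ℝ} (hc : c ≠ 0) (x : E) :
    MemLp (fun y ↦ g (c • (x - y))) m μ := by
  have hscaled : MemLp (g ∘ (c • ·)) m μ := by
    refine MemLp.comp_of_map ?_ (by fun_prop)
    rw [Measure.map_addHaar_smul μ hc]
    exact hg.smul_measure ENNReal.ofReal_ne_top
  exact hscaled.comp_measurePreserving (μ.measurePreserving_sub_left x)

lemma integral_comp_inv_smul_sub (g : E → ℝ) (hr : 0 ≤ r) (x : E) :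
    ∫ y, g (r⁻¹ • (x - y)) ∂μ = r ^ finrank ℝ E * ∫ z, g z ∂μ := by
  rw [integral_sub_left_eq_self (fun y ↦ g (r⁻¹ • y)) μ x,
    Measure.integral_comp_inv_smul_of_nonneg μ g hr, smul_eq_mul]

lemma integral_comp_inv_smul_sub_mul_le (hpq : q.HolderConjugate p) {k : E → ℝ}
    (hk0 : 0 ≤ k) (hg0 : 0 ≤ g) (hk : MemLp k (ENNReal.ofReal q) μ)
    (hg : MemLp g (ENNReal.ofReal p) μ) (hr : 0 < r) (x : E) :
    ∫ y, k (r⁻¹ • (x - y)) * g y ∂μ ≤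
      ((∫ z, k z ^ q ∂μ) ^ (1 / q) * (∫ y, g y ^ p ∂μ) ^ (1 / p)) *
        r ^ (finrank ℝ E / q : ℝ) := by
  have hk_int : 0 ≤ ∫ z, k z ^ q ∂μ := integral_nonneg fun z ↦ rpow_nonneg (hk0 z) q
  have hscale : (r ^ finrank ℝ E : ℝ) ^ (1 / q) = r ^ (finrank ℝ E / q : ℝ) := by
    rw [← rpow_natCast, ← rpow_mul hr.le, mul_one_div]
  calc ∫ y, k (r⁻¹ • (x - y)) * g y ∂μ
      ≤ (∫ y, k (r⁻¹ • (x - y)) ^ q ∂μ) ^ (1 / q) * (∫ y, g y ^ p ∂μ) ^ (1 / p) :=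
        integral_mul_le_Lp_mul_Lq_of_nonneg hpq (.of_forall fun y ↦ hk0 (r⁻¹ • (x - y)))
          (.of_forall hg0) (memLp_comp_smul_sub hk (inv_ne_zero hr.ne') x) hg
    _ = _ := by
      rw [integral_comp_inv_smul_sub (fun z ↦ k z ^ q) hr.le x,
        mul_rpow (by positivity) hk_int, hscale]
      ring

end Convolution

variable [Nontrivial E]

section SingularPart

lemma memLp_posLog_inv_norm (hq : 0 < q) :
    MemLp (fun z : E ↦ log⁺ ‖z‖⁻¹) (ENNReal.ofReal q) μ := by
  have hmeas : Measurable fun z : E ↦ log⁺ ‖z‖⁻¹ := by fun_prop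
  rw [← integrable_norm_rpow_iff hmeas.aestronglyMeasurable (by simpa using hq) (by simp),
    ENNReal.toReal_ofReal hq.le]
  have hsupport : (fun z : E ↦ ‖log⁺ ‖z‖⁻¹‖ ^ q).support ⊆ Metric.ball 0 1 := by
    refine Function.support_subset_iff'.2 fun z hz ↦ ?_
    have hz1 : 1 ≤ ‖z‖ := by simpa using hz
    have hzero : log⁺ ‖z‖⁻¹ = 0 := by
      simpa [posLog_eq_zero_iff] using inv_le_one_of_one_le₀ hz1
    simp [hzero, hq.ne']
  have hbound (z : E) : ‖‖log⁺ ‖z‖⁻¹‖ ^ q‖ ≤ (2 * q) ^ q * ‖z‖ ^ (-(1 / 2) : ℝ) := by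
    rw [norm_of_nonneg (by positivity), norm_of_nonneg posLog_nonneg]
    calc log⁺ ‖z‖⁻¹ ^ q ≤ (‖z‖⁻¹ ^ (1 / (2 * q)) / (1 / (2 * q))) ^ q :=
          rpow_le_rpow posLog_nonneg
            (posLog_le_rpow_div (by positivity) (by positivity)) hq.le
      _ = (2 * q) ^ q * ‖z‖ ^ (-(1 / 2) : ℝ) := by
        rw [one_div, div_inv_eq_mul, mul_rpow (by positivity) (by positivity),
          ← rpow_mul (by positivity), show (2 * q)⁻¹ * q = 1 / 2 by field_simp,
          inv_rpow (norm_nonneg _), ← rpow_neg (norm_nonneg _), mul_comm]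
  have hdim : (1 : ℝ) ≤ finrank ℝ E := mod_cast finrank_pos (R := ℝ) (M := E)
  refine (integrableOn_iff_integrable_of_support_subset hsupport).1 ?_
  exact integrableOn_ball_of_norm_le_rpow finrank_pos (by linarith : (1 / 2 : ℝ) < finrank ℝ E)
    (.of_forall hbound) (hmeas.norm.pow_const q).aestronglyMeasurable

lemma integrable_posLog_div_norm_sub_mul (hpq : p.HolderConjugate q)
    (hf : MemLp f (ENNReal.ofReal p) μ) (hr : 0 < r) (x : E) :
    Integrable (fun y ↦ log⁺ (r / ‖x - y‖) * f y) μ := by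
  have := hpq.symm.ennrealOfReal
  simp_rw [posLog_div_norm_sub_eq hr.le]
  exact (memLp_comp_smul_sub (memLp_posLog_inv_norm hpq.symm.pos)
    (inv_ne_zero hr.ne') x).integrable_mul hf

lemma exists_integral_posLog_div_norm_sub_mul_abs_le (hpq : p.HolderConjugate q)
    (hf : MemLp f (ENNReal.ofReal p) μ) :
    ∃ M, 0 ≤ M ∧ ∀ r, 0 < r → ∀ x : E,
      ∫ y, log⁺ (r / ‖x - y‖) * |f y| ∂μ ≤ M * r ^ (finrank ℝ E / q : ℝ) := by
  refine ⟨(∫ z : E, log⁺ ‖z‖⁻¹ ^ q ∂μ) ^ (1 / q) * (∫ y, |f y| ^ p ∂μ) ^ (1 / p), ?_,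
    fun r hr x ↦ ?_⟩
  · have : 0 ≤ ∫ z : E, log⁺ ‖z‖⁻¹ ^ q ∂μ :=
      integral_nonneg fun z ↦ rpow_nonneg posLog_nonneg q
    positivity
  · simp_rw [posLog_div_norm_sub_eq hr.le]
    exact integral_comp_inv_smul_sub_mul_le hpq.symm (fun z ↦ posLog_nonneg)
      (fun y ↦ abs_nonneg (f y)) (memLp_posLog_inv_norm hpq.symm.pos) hf.abs hr x

end SingularPart

section LogPotential

lemma integrable_log_norm_sub_mul (hpq : p.HolderConjugate q) (hf : Integrable f μ)
    (hlog : Integrable (fun y ↦ log⁺ ‖y‖ * f y) μ) (hfp : MemLp f (ENNReal.ofReal p) μ) (x : E) :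
    Integrable (fun y ↦ log ‖x - y‖ * f y) μ := by
  refine ((integrable_log_max_norm_sub_mul hf hlog one_pos x).sub
    (integrable_posLog_div_norm_sub_mul hpq hfp one_pos x)).congr ?_
  filter_upwards [Measure.ae_ne μ x] with y hy
  have hd0 : 0 < ‖x - y‖ := norm_pos_iff.2 (sub_ne_zero.2 hy.symm)
  rw [Pi.sub_apply, ← log_max_sub_log_eq_posLog_div hd0 one_pos]
  ring

lemma truncatedLogPotential_sub_logPotential (hpq : p.HolderConjugate q) (hf : Integrable f μ)
    (hlog : Integrable (fun y ↦ log⁺ ‖y‖ * f y) μ) (hfp : MemLp f (ENNReal.ofReal p) μ)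
    (hr : 0 < r) (x : E) :
    truncatedLogPotential μ f r x - logPotential μ f x =
      ∫ y, log⁺ (r / ‖x - y‖) * f y ∂μ := by
  rw [truncatedLogPotential, logPotential,
    ← integral_sub (integrable_log_max_norm_sub_mul hf hlog hr x)
      (integrable_log_norm_sub_mul hpq hf hlog hfp x)]
  refine integral_congr_ae ?_
  filter_upwards [Measure.ae_ne μ x] with y hy
  have hd0 : 0 < ‖x - y‖ := norm_pos_iff.2 (sub_ne_zero.2 hy.symm)
  rw [← sub_mul, log_max_sub_log_eq_posLog_div hd0 hr]

lemma tendstoUniformly_truncatedLogPotential (hpq : p.HolderConjugate q) (hf : Integrable f μ)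
    (hlog : Integrable (fun y ↦ log⁺ ‖y‖ * f y) μ) (hfp : MemLp f (ENNReal.ofReal p) μ) :
    TendstoUniformly (truncatedLogPotential μ f) (logPotential μ f) (𝓝[>] 0) := by
  obtain ⟨M, -, hM⟩ := exists_integral_posLog_div_norm_sub_mul_abs_le hpq hfp
  have hexp : 0 < finrank ℝ E / q := div_pos (mod_cast finrank_pos) hpq.symm.pos
  have hlim : Tendsto (fun r : ℝ ↦ M * r ^ (finrank ℝ E / q)) (𝓝[>] 0) (𝓝 0) := by
    have hcont : Continuous fun r : ℝ ↦ M * r ^ (finrank ℝ E / q) :=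
      continuous_const.mul (continuous_id.rpow_const fun _ ↦ .inr hexp.le)
    simpa [zero_rpow hexp.ne'] using (hcont.tendsto 0).mono_left nhdsWithin_le_nhds
  refine Metric.tendstoUniformly_iff.2 fun ε hε ↦ ?_
  filter_upwards [hlim.eventually_lt_const hε, self_mem_nhdsWithin] with r hrε hr x
  rw [dist_comm, dist_eq, truncatedLogPotential_sub_logPotential hpq hf hlog hfp hr]
  refine lt_of_le_of_lt ?_ ((hM r hr x).trans_lt hrε)
  refine abs_integral_le_integral_abs.trans_eq (integral_congr_ae (.of_forall fun y ↦ ?_))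
  simp only [abs_mul, abs_of_nonneg posLog_nonneg]

lemma continuous_logPotential (hpq : p.HolderConjugate q) (hf : Integrable f μ)
    (hlog : Integrable (fun y ↦ log⁺ ‖y‖ * f y) μ) (hfp : MemLp f (ENNReal.ofReal p) μ) :
    Continuous (logPotential μ f) := by
  refine (tendstoUniformly_truncatedLogPotential hpq hf hlog hfp).continuous ?_
  refine Eventually.frequently ?_
  filter_upwards [self_mem_nhdsWithin] with r hr
  exact continuous_truncatedLogPotential hf hlog hr

end LogPotential

section Decay

lemma abs_logPotential_le (hpq : p.HolderConjugate q) (hf : Integrable f μ)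
    (hzero : ∫ y, f y ∂μ = 0) (hτ : 0 < τ) (hτ1 : τ ≤ 1) (hs : 0 ≤ s)
    (hmoment : Integrable (fun y ↦ (1 + ‖y‖) ^ τ * f y) μ)
    (hfs : MemLp (fun y ↦ (1 + ‖y‖) ^ s * f y) (ENNReal.ofReal p) μ) {x : E} (hx : x ≠ 0)
    (hint : Integrable (fun y ↦ log ‖x - y‖ * f y) μ) :
    |logPotential μ f x| ≤
      2 / τ * ‖x‖ ^ (-τ) * ∫ y, |(1 + ‖y‖) ^ τ * f y| ∂μ +
        (‖x‖ / 2) ^ (-s) *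
          ∫ y, log⁺ (‖x‖ / 2 / ‖x - y‖) * |(1 + ‖y‖) ^ s * f y| ∂μ := by
  have hfar := hmoment.abs.const_mul (2 / τ * ‖x‖ ^ (-τ))
  have hnear : Integrable (fun y ↦ (‖x‖ / 2) ^ (-s) *
      (log⁺ (‖x‖ / 2 / ‖x - y‖) * |(1 + ‖y‖) ^ s * f y|)) μ :=
    (integrable_posLog_div_norm_sub_mul hpq hfs.abs (half_pos (norm_pos_iff.2 hx)) x).const_mul _
  rw [logPotential_eq_integral_sub_of_integral_eq_zero hf hzero hint, ← integral_const_mul,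
    ← integral_const_mul, ← integral_add hfar hnear, ← norm_eq_abs]
  refine norm_integral_le_of_norm_le (hfar.add hnear) ?_
  filter_upwards [Measure.ae_ne μ x] with y hy
  exact abs_log_norm_sub_sub_log_norm_mul_le hy.symm hx hτ hτ1 hs (f y)

lemma logPotential_isBigO_rpow_neg (hpq : p.HolderConjugate q) (hf : Integrable f μ)
    (hzero : ∫ y, f y ∂μ = 0) (hτ : 0 < τ) (hτ1 : τ ≤ 1) (hs : τ + finrank ℝ E / q ≤ s)
    (hmoment : Integrable (fun y ↦ (1 + ‖y‖) ^ τ * f y) μ)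
    (hfs : MemLp (fun y ↦ (1 + ‖y‖) ^ s * f y) (ENNReal.ofReal p) μ)
    (hint : ∀ x, Integrable (fun y ↦ log ‖x - y‖ * f y) μ) :
    logPotential μ f =O[cobounded E] fun x ↦ ‖x‖ ^ (-τ) := by
  obtain ⟨M, hM0, hM⟩ := exists_integral_posLog_div_norm_sub_mul_abs_le hpq hfs
  have hs0 : 0 ≤ s := by have := hpq.symm.pos; exact le_trans (by positivity) hs
  refine .of_bound (2 / τ * ∫ y, |(1 + ‖y‖) ^ τ * f y| ∂μ + M * 2 ^ τ) ?_
  filter_upwards [eventually_cobounded_le_norm 2] with x hx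
  have hx0 : 0 < ‖x‖ := by linarith
  have hnear : (‖x‖ / 2) ^ (-s) * (M * (‖x‖ / 2) ^ (finrank ℝ E / q : ℝ)) ≤
      M * 2 ^ τ * ‖x‖ ^ (-τ) :=
    calc _ = M * (‖x‖ / 2) ^ (-s + finrank ℝ E / q) := by rw [rpow_add (by positivity)]; ring
      _ ≤ M * (‖x‖ / 2) ^ (-τ) := by gcongr <;> linarith
      _ = M * 2 ^ τ * ‖x‖ ^ (-τ) := by
        rw [div_rpow hx0.le zero_le_two, rpow_neg zero_le_two, div_inv_eq_mul]; ring
  have hbound := abs_logPotential_le hpq hf hzero hτ hτ1 hs0 hmoment hfs (norm_pos_iff.1 hx0)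
    (hint x)
  have hsingular : (‖x‖ / 2) ^ (-s) *
      ∫ y, log⁺ (‖x‖ / 2 / ‖x - y‖) * |(1 + ‖y‖) ^ s * f y| ∂μ ≤
        (‖x‖ / 2) ^ (-s) * (M * (‖x‖ / 2) ^ (finrank ℝ E / q : ℝ)) := by
    gcongr
    exact hM _ (half_pos hx0) x
  rw [norm_eq_abs, norm_of_nonneg (by positivity)]
  linarith

end Decay

end FiniteDimensional

theorem stmt6_general {E : Type*} [NormedAddCommGroup E] [NormedSpace ℝ E]
    [FiniteDimensional ℝ E] [Nontrivial E] [MeasurableSpace E] [BorelSpace E] {μ : Measure E}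
    [μ.IsAddHaarMeasure] {f : E → ℝ} (hf : AEStronglyMeasurable f μ) (hzero : ∫ x, f x ∂μ = 0)
    {p γ : ℝ} (hp : 1 < p) (hγ : 0 < γ)
    (hwt : Integrable (fun x ↦ |f x| ^ p * (1 + ‖x‖) ^ (γ * p + finrank ℝ E * (p - 1))) μ) :
    (∀ x, Integrable (fun y ↦ log ‖x - y‖ * f y) μ) ∧ Continuous (logPotential μ f) ∧
      ∀ τ, 0 < τ → τ ≤ 1 → τ < γ →
        logPotential μ f =O[cobounded E] fun x ↦ ‖x‖ ^ (-τ) := by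
  have hpq := HolderConjugate.conjExponent hp
  set q := p.conjExponent
  set s : ℝ := γ + finrank ℝ E / q with hs
  have hs0 : 0 ≤ s := add_nonneg hγ.le (div_nonneg (Nat.cast_nonneg _) hpq.symm.nonneg)
  have hsp : s * p = γ * p + finrank ℝ E * (p - 1) := by
    rw [hs, ← hpq.div_conj_eq_sub_one]; ring
  have hfs : MemLp (fun y ↦ (1 + ‖y‖) ^ s * f y) (ENNReal.ofReal p) μ :=
    (memLp_one_add_norm_rpow_mul_iff hf hpq.pos).2 (by rwa [hsp])
  have hfp := memLp_of_memLp_one_add_norm_rpow_mul hf hs0 hfs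
  have hmoment (τ : ℝ) (hτ : τ < γ) : Integrable (fun y ↦ (1 + ‖y‖) ^ τ * f y) μ :=
    integrable_one_add_norm_rpow_mul_of_memLp hpq hfs (by linarith)
  have hf1 : Integrable f μ := by simpa using hmoment 0 hγ
  have hlog := integrable_posLog_norm_mul hf (half_pos hγ) (hmoment _ (half_lt_self hγ))
  have hint := integrable_log_norm_sub_mul hpq hf1 hlog hfp
  exact ⟨hint, continuous_logPotential hpq hf1 hlog hfp, fun τ hτ hτ1 hτγ ↦
    logPotential_isBigO_rpow_neg hpq hf1 hzero hτ hτ1 (by linarith) (hmoment τ hτγ) hfs hint⟩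

theorem stmt6 (f : E2 → ℝ) (hmeas : Measurable f) (hf : Integrable f)
    (hzero : ∫ x, f x = 0) (p₀ β : ℝ) (hp₀ : 1 < p₀) (hβ : 0 < β)
    (hwt : Integrable (fun x : E2 => |f x| ^ p₀ * (1 + ‖x‖) ^ (2*β*p₀ + 2*(p₀-1)))) :
    (∀ x : E2, Integrable (fun y : E2 => log ‖x - y‖ * f y)) ∧
    Continuous (fun x : E2 => -(1/(2*π)) * ∫ y : E2, log ‖x - y‖ * f y) ∧
    ∃ C R : ℝ, 0 < C ∧ ∀ x : E2, R ≤ ‖x‖ →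
      |-(1/(2*π)) * ∫ y : E2, log ‖x - y‖ * f y| ≤
        C * ‖x‖ ^ (-(2*β/(1+2*β))) * log ‖x‖ := by
  obtain ⟨hint, hcont, hdecay⟩ := stmt6_general (γ := 2 * β) hmeas.aestronglyMeasurable hzero hp₀
    (by positivity) (by simpa using hwt)
  have hτ1 : 2 * β / (1 + 2 * β) ≤ 1 := div_le_one_of_le₀ (by linarith) (by positivity)
  have hτβ : 2 * β / (1 + 2 * β) < 2 * β := div_lt_self (by positivity) (by linarith)
  exact ⟨hint, hcont.const_mul _, exists_abs_le_mul_log_norm_of_isBigO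
    ((hdecay _ (by positivity) hτ1 hτβ).const_mul_left _) fun x ↦ by positivity⟩
end
end

section
/- Let K ≤ 0 be locally bounded with α_1(K) > 0, let α ∈ (0, α_1(K)), and let u be a continuous solution of Δu + K e^{2u} = 0 in ℝ² with u(x) = α ln|x| + O(1) at infinity. Then the total curvature satisfies ∫_{ℝ²} K e^{2u} dx = -2απ. -/
open MeasureTheory Real Filter
noncomputable section
/-!
Test `Δ u` against the logarithmic cutoffs `φ_L x = ψ (log ‖x‖ / L)`, where `ψ` decreases smoothly
from `1` on `(-∞, 1]` to `0` on `[2, ∞)`. In the plane `log ‖x‖` is harmonic away from the origin,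
so `Δ φ_L x = ψ'' (log ‖x‖ / L) / (L ^ 2 * ‖x‖ ^ 2)`. In logarithmic polar coordinates this gives
`∫ log ‖x‖ * Δ φ_L = 2 π ∫ t ψ''(t) dt = 2 π`, while `∫ |log ‖x‖ * Δ φ_L|` does not depend on `L`.
As `L → ∞` the part of `u` that is `o(log ‖x‖)` therefore drops out of
`∫ Δ u * φ_L = ∫ u * Δ φ_L`, and only `∫ Δ u = 2 π α` remains.
-/

open Asymptotics Bornology Laplacian Module Topology

section SecondDerivative

variable {E : Type*} [NormedAddCommGroup E] [NormedSpace ℝ E]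

theorem fderiv_fderiv_apply_const {f : E → ℝ} (hf : ContDiff ℝ 2 f) (x v w : E) :
    fderiv ℝ (fun y => fderiv ℝ f y v) x w = fderiv ℝ (fderiv ℝ f) x w v := by
  have hDf : DifferentiableAt ℝ (fderiv ℝ f) x :=
    (hf.fderiv_right (m := 1) le_rfl).differentiable one_ne_zero x
  rw [fderiv_clm_apply hDf (differentiableAt_const v)]
  simp

theorem continuous_fderiv_fderiv_apply {f : E → ℝ} (hf : ContDiff ℝ 2 f) (v w : E) :
    Continuous fun x => fderiv ℝ (fderiv ℝ f) x v w :=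
  (((hf.fderiv_right (m := 1) le_rfl).continuous_fderiv one_ne_zero).clm_apply
    continuous_const).clm_apply continuous_const

end SecondDerivative

section LogNorm

variable {E : Type*} [NormedAddCommGroup E] [InnerProductSpace ℝ E]

theorem hasFDerivAt_log_norm {x : E} (hx : x ≠ 0) :
    HasFDerivAt (fun y : E => log ‖y‖) ((‖x‖ ^ 2)⁻¹ • innerSL ℝ x) x := by
  have hsq : HasFDerivAt (fun y : E => log (‖y‖ ^ 2) / 2) ((‖x‖ ^ 2)⁻¹ • innerSL ℝ x) x := by
    refine (((hasStrictFDerivAt_norm_sq x).hasFDerivAt.log (by positivity)).mul_const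
      (2⁻¹ : ℝ)).congr_fderiv ?_
    module
  simpa [Real.log_pow] using hsq

theorem fderiv_fderiv_log_norm {x : E} (hx : x ≠ 0) (v : E) :
    fderiv ℝ (fderiv ℝ fun y : E => log ‖y‖) x v v
      = ‖v‖ ^ 2 / ‖x‖ ^ 2 - 2 * inner ℝ x v ^ 2 / ‖x‖ ^ 4 := by
  have hgrad : fderiv ℝ (fun y : E => log ‖y‖) =ᶠ[𝓝 x] fun y => (‖y‖ ^ 2)⁻¹ • innerSL ℝ y := by
    filter_upwards [isOpen_ne.mem_nhds hx] with y hy using (hasFDerivAt_log_norm hy).fderiv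
  have hinv : HasFDerivAt (fun y : E => (‖y‖ ^ 2)⁻¹)
      (-((‖x‖ ^ 2) ^ 2)⁻¹ • 2 • innerSL ℝ x) x :=
    (hasDerivAt_inv (by positivity)).comp_hasFDerivAt x (hasStrictFDerivAt_norm_sq x).hasFDerivAt
  have hHess := hinv.smul (innerSL ℝ (E := E)).hasFDerivAt
  rw [hgrad.fderiv_eq.trans hHess.fderiv]
  change (‖x‖ ^ 2)⁻¹ * inner ℝ v v + -((‖x‖ ^ 2) ^ 2)⁻¹ * (2 • inner ℝ x v) * inner ℝ x v = _
  rw [real_inner_self_eq_norm_sq, nsmul_eq_mul]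
  field_simp
  ring

end LogNorm

section Laplacian

variable {E : Type*} [NormedAddCommGroup E] [InnerProductSpace ℝ E] [FiniteDimensional ℝ E]

theorem laplacian_eq_sum_fderiv_fderiv {ι : Type*} [Fintype ι] (b : OrthonormalBasis ι ℝ E)
    (f : E → ℝ) (x : E) : Δ f x = ∑ i, fderiv ℝ (fderiv ℝ f) x (b i) (b i) := by
  simp [InnerProductSpace.laplacian_eq_iteratedFDeriv_orthonormalBasis f b,
    iteratedFDeriv_two_apply]

theorem lap_eq_laplacian {u : E2 → ℝ} (hu : ContDiff ℝ 2 u) : lap u = Δ u := by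
  ext x
  simp [lap, laplacian_eq_sum_fderiv_fderiv (EuclideanSpace.basisFun (Fin 2) ℝ),
    fderiv_fderiv_apply_const hu]

theorem continuous_laplacian {f : E → ℝ} (hf : ContDiff ℝ 2 f) : Continuous (Δ f) := by
  rw [funext (laplacian_eq_sum_fderiv_fderiv (stdOrthonormalBasis ℝ E) f)]
  exact continuous_finsetSum _ fun i _ => continuous_fderiv_fderiv_apply hf _ _

theorem support_laplacian_subset (f : E → ℝ) : Function.support (Δ f) ⊆ tsupport f := by
  intro x hx
  by_contra hxf
  have hf : f =ᶠ[𝓝 x] fun _ => 0 := notMem_tsupport_iff_eventuallyEq.1 hxf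
  exact hx (by simpa using (InnerProductSpace.laplacian_congr_nhds hf).eq_of_nhds)

theorem hasCompactSupport_laplacian {f : E → ℝ} (hf : HasCompactSupport f) :
    HasCompactSupport (Δ f) :=
  hf.mono' (support_laplacian_subset f)

theorem laplacian_comp {f : ℝ → ℝ} {g : E → ℝ} {x : E} (hf : ContDiffAt ℝ 2 f (g x))
    (hg : ContDiffAt ℝ 2 g x) :
    Δ (fun y => f (g y)) x
      = deriv (deriv f) (g x) * ‖fderiv ℝ g x‖ ^ 2 + deriv f (g x) * Δ g x := by
  have hchain : fderiv ℝ (fun y => f (g y)) =ᶠ[𝓝 x] fun y => deriv f (g y) • fderiv ℝ g y := by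
    filter_upwards [hg.continuousAt.eventually (hf.eventually (by simp)),
      hg.eventually (by simp)] with y hfy hgy
    exact ((hfy.differentiableAt two_ne_zero).hasDerivAt.comp_hasFDerivAt y
      (hgy.differentiableAt two_ne_zero).hasFDerivAt).fderiv
  have hdf : HasDerivAt (deriv f) (deriv (deriv f) (g x)) (g x) :=
    ((hf.derivWithin (m := 1) (by norm_num)).differentiableAt one_ne_zero).hasDerivAt
  have hdg : HasFDerivAt g (fderiv ℝ g x) x := (hg.differentiableAt two_ne_zero).hasFDerivAt
  have hddg : HasFDerivAt (fderiv ℝ g) (fderiv ℝ (fderiv ℝ g) x) x :=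
    ((hg.fderiv_right (m := 1) le_rfl).differentiableAt one_ne_zero).hasFDerivAt
  have hsecond : fderiv ℝ (fderiv ℝ fun y => f (g y)) x = deriv f (g x) • fderiv ℝ (fderiv ℝ g) x
      + (deriv (deriv f) (g x) • fderiv ℝ g x).smulRight (fderiv ℝ g x) :=
    hchain.fderiv_eq.trans ((hdf.comp_hasFDerivAt x hdg).smul hddg).fderiv
  let b := stdOrthonormalBasis ℝ E
  rw [laplacian_eq_sum_fderiv_fderiv b, laplacian_eq_sum_fderiv_fderiv b, b.norm_dual]
  simp only [hsecond, add_apply, smul_apply, ContinuousLinearMap.smulRight_apply, smul_eq_mul,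
    Finset.sum_add_distrib, Finset.mul_sum]
  rw [add_comm]
  simp only [mul_assoc, sq]

theorem laplacian_log_norm {x : E} (hx : x ≠ 0) :
    Δ (fun y : E => log ‖y‖) x = (finrank ℝ E - 2) / ‖x‖ ^ 2 := by
  let b := stdOrthonormalBasis ℝ E
  simp only [laplacian_eq_sum_fderiv_fderiv b, fderiv_fderiv_log_norm hx, b.norm_eq_one,
    Finset.sum_sub_distrib, ← Finset.sum_div, ← Finset.mul_sum, b.sum_sq_inner_left,
    Finset.sum_const, Finset.card_univ, Fintype.card_fin, one_pow, nsmul_one]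
  field_simp

theorem laplacian_comp_log_norm {f : ℝ → ℝ} {x : E} (hf : ContDiffAt ℝ 2 f (log ‖x‖))
    (hx : x ≠ 0) :
    Δ (fun y : E => f (log ‖y‖)) x
      = (deriv (deriv f) (log ‖x‖) + (finrank ℝ E - 2) * deriv f (log ‖x‖)) / ‖x‖ ^ 2 := by
  have hlog : ContDiffAt ℝ 2 (fun y : E => log ‖y‖) x :=
    (contDiffAt_norm ℝ hx).log (norm_ne_zero_iff.2 hx)
  have hgrad : ‖fderiv ℝ (fun y : E => log ‖y‖) x‖ = ‖x‖⁻¹ := by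
    rw [(hasFDerivAt_log_norm hx).fderiv, norm_smul, innerSL_apply_norm]
    rw [norm_inv, norm_pow, norm_norm]
    field_simp
  rw [laplacian_comp (g := fun y : E => log ‖y‖) hf hlog, hgrad, laplacian_log_norm hx]
  field_simp

section Green

variable [MeasurableSpace E] [BorelSpace E] {μ : Measure E} [μ.IsAddHaarMeasure]

theorem integral_mul_fderiv_eq_neg_of_hasCompactSupport {f g : E → ℝ} (hf : ContDiff ℝ 1 f)
    (hg : ContDiff ℝ 1 g) (hgc : HasCompactSupport g) (v : E) :
    ∫ x, f x * fderiv ℝ g x v ∂μ = -∫ x, fderiv ℝ f x v * g x ∂μ := by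
  have hf' : Continuous fun x => fderiv ℝ f x v :=
    (hf.continuous_fderiv one_ne_zero).clm_apply continuous_const
  have hg' : Continuous fun x => fderiv ℝ g x v :=
    (hg.continuous_fderiv one_ne_zero).clm_apply continuous_const
  exact integral_mul_fderiv_eq_neg_fderiv_mul_of_integrable
    ((hf'.mul hg.continuous).integrable_of_hasCompactSupport hgc.mul_left)
    ((hf.continuous.mul hg').integrable_of_hasCompactSupport (hgc.fderiv_apply ℝ v).mul_left)
    ((hf.continuous.mul hg.continuous).integrable_of_hasCompactSupport hgc.mul_left)
    (fun x _ => hf.differentiable one_ne_zero x) (fun x _ => hg.differentiable one_ne_zero x)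

theorem integral_fderiv_fderiv_mul_of_hasCompactSupport {f g : E → ℝ} (hf : ContDiff ℝ 2 f)
    (hg : ContDiff ℝ 2 g) (hgc : HasCompactSupport g) (v : E) :
    ∫ x, fderiv ℝ (fderiv ℝ f) x v v * g x ∂μ = ∫ x, f x * fderiv ℝ (fderiv ℝ g) x v v ∂μ := by
  have hf' : ContDiff ℝ 1 fun x => fderiv ℝ f x v :=
    (hf.fderiv_right le_rfl).clm_apply contDiff_const
  have hg' : ContDiff ℝ 1 fun x => fderiv ℝ g x v :=
    (hg.fderiv_right le_rfl).clm_apply contDiff_const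
  have hfirst := integral_mul_fderiv_eq_neg_of_hasCompactSupport (μ := μ) hf'
    (hg.of_le one_le_two) hgc v
  have hsecond := integral_mul_fderiv_eq_neg_of_hasCompactSupport (μ := μ)
    (hf.of_le one_le_two) hg' (hgc.fderiv_apply ℝ v) v
  simp only [fderiv_fderiv_apply_const hf, fderiv_fderiv_apply_const hg] at hfirst hsecond
  rw [hsecond, hfirst, neg_neg]

theorem integral_laplacian_mul_of_hasCompactSupport {f g : E → ℝ} (hf : ContDiff ℝ 2 f)
    (hg : ContDiff ℝ 2 g) (hgc : HasCompactSupport g) :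
    ∫ x, Δ f x * g x ∂μ = ∫ x, f x * Δ g x ∂μ := by
  have hsupp (v : E) : HasCompactSupport fun x => fderiv ℝ (fderiv ℝ g) x v v :=
    ((hgc.fderiv ℝ).fderiv ℝ).mono fun x hx h => hx (by simp [h])
  have hleft (v : E) : Integrable (fun x => fderiv ℝ (fderiv ℝ f) x v v * g x) μ :=
    ((continuous_fderiv_fderiv_apply hf v v).mul hg.continuous).integrable_of_hasCompactSupport
      hgc.mul_left
  have hright (v : E) : Integrable (fun x => f x * fderiv ℝ (fderiv ℝ g) x v v) μ :=
    (hf.continuous.mul (continuous_fderiv_fderiv_apply hg v v)).integrable_of_hasCompactSupport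
      (hsupp v).mul_left
  simp only [laplacian_eq_sum_fderiv_fderiv (stdOrthonormalBasis ℝ E), Finset.sum_mul,
    Finset.mul_sum]
  rw [integral_finsetSum _ fun i _ => hleft _, integral_finsetSum _ fun i _ => hright _]
  exact Finset.sum_congr rfl fun i _ => integral_fderiv_fderiv_mul_of_hasCompactSupport hf hg hgc _

end Green
end Laplacian

section LogPolar

theorem integral_exp_smul_comp_exp {F : Type*} [NormedAddCommGroup F] [NormedSpace ℝ F]
    (g : ℝ → F) : ∫ t, exp t • g (exp t) = ∫ r in Set.Ioi 0, g r := by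
  have h := integral_image_eq_integral_abs_deriv_smul MeasurableSet.univ
    (fun t _ => (hasDerivAt_exp t).hasDerivWithinAt) exp_injective.injOn g
  simpa [Set.image_univ, range_exp] using h.symm

theorem integrable_exp_smul_comp_exp_iff {F : Type*} [NormedAddCommGroup F] [NormedSpace ℝ F]
    {g : ℝ → F} : Integrable (fun t => exp t • g (exp t)) ↔ IntegrableOn g (Set.Ioi 0) := by
  have h := integrableOn_image_iff_integrableOn_abs_deriv_smul MeasurableSet.univ
    (fun t _ => (hasDerivAt_exp t).hasDerivWithinAt) exp_injective.injOn g
  simpa [Set.image_univ, range_exp] using h.symm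

variable {E : Type*} [NormedAddCommGroup E] [NormedSpace ℝ E] [FiniteDimensional ℝ E]
  [Nontrivial E]

theorem exp_mul_exp_pow_finrank_sub_one_mul_div (a t : ℝ) :
    exp t * (exp t ^ (finrank ℝ E - 1) * (a / exp t ^ finrank ℝ E)) = a := by
  rw [← mul_assoc, mul_pow_sub_one finrank_pos.ne', mul_div_cancel₀ _ (by positivity)]

variable [MeasurableSpace E] [BorelSpace E] (μ : Measure E) [μ.IsAddHaarMeasure]

theorem integral_comp_log_norm_div_pow_finrank (f : ℝ → ℝ) :
    ∫ x : E, f (log ‖x‖) / ‖x‖ ^ finrank ℝ E ∂μ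
      = finrank ℝ E * μ.real (Metric.ball 0 1) * ∫ t, f t := by
  rw [integral_fun_norm_addHaar μ fun r => f (log r) / r ^ finrank ℝ E,
    ← integral_exp_smul_comp_exp]
  simp [exp_mul_exp_pow_finrank_sub_one_mul_div, mul_assoc]

theorem integrable_comp_log_norm_div_pow_finrank_iff {f : ℝ → ℝ} :
    Integrable (fun x : E => f (log ‖x‖) / ‖x‖ ^ finrank ℝ E) μ ↔ Integrable f := by
  rw [integrable_fun_norm_addHaar μ (f := fun r => f (log r) / r ^ finrank ℝ E),
    ← integrable_exp_smul_comp_exp_iff]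
  simp [exp_mul_exp_pow_finrank_sub_one_mul_div]

end LogPolar

theorem integral_mul_deriv_deriv_of_hasCompactSupport {f : ℝ → ℝ} {a b : ℝ}
    (hf : ContDiff ℝ 2 f) (hc : HasCompactSupport (deriv f)) (hbot : Tendsto f atBot (𝓝 a))
    (htop : Tendsto f atTop (𝓝 b)) : ∫ t, t * deriv (deriv f) t = a - b := by
  have hf' : ContDiff ℝ 1 (deriv f) := hf.deriv'
  have hderiv (t : ℝ) : HasDerivAt f (deriv f t) t :=
    (hf.differentiable two_ne_zero t).hasDerivAt
  have hint : Integrable (deriv f) := hf'.continuous.integrable_of_hasCompactSupport hc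
  calc ∫ t, t * deriv (deriv f) t = -∫ t, 1 * deriv f t :=
        integral_mul_deriv_eq_deriv_mul_of_integrable (fun t _ => hasDerivAt_id t)
          (fun t _ => (hf'.differentiable one_ne_zero t).hasDerivAt)
          ((continuous_id.mul hf'.continuous_deriv_one).integrable_of_hasCompactSupport
            hc.deriv.mul_left)
          (by simpa [Pi.mul_def] using hint)
          ((continuous_id.mul hf'.continuous).integrable_of_hasCompactSupport hc.mul_left)
    _ = a - b := by
        simp only [one_mul, integral_of_hasDerivAt_of_tendsto hderiv hint hbot htop, neg_sub]

section SmoothStepDown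

/-- A smooth profile on `ℝ` that decreases from `1` on `(-∞, 1]` to `0` on `[2, ∞)`. -/
def smoothStepDown (t : ℝ) : ℝ := smoothTransition (2 - t)

theorem contDiff_smoothStepDown : ContDiff ℝ 2 smoothStepDown :=
  (smoothTransition.contDiff (n := 2)).comp (contDiff_const.sub contDiff_id)

theorem smoothStepDown_of_le_one {t : ℝ} (ht : t ≤ 1) : smoothStepDown t = 1 :=
  smoothTransition.one_of_one_le (by linarith)

theorem smoothStepDown_of_two_le {t : ℝ} (ht : 2 ≤ t) : smoothStepDown t = 0 :=
  smoothTransition.zero_of_nonpos (by linarith)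

theorem norm_smoothStepDown_le_one (t : ℝ) : ‖smoothStepDown t‖ ≤ 1 := by
  rw [norm_eq_abs, smoothStepDown, abs_of_nonneg (smoothTransition.nonneg _)]
  exact smoothTransition.le_one _

theorem tsupport_deriv_smoothStepDown_subset : tsupport (deriv smoothStepDown) ⊆ Set.Icc 1 2 := by
  refine closure_minimal (fun t ht => ?_) isClosed_Icc
  by_contra htIcc
  rw [Set.mem_Icc, not_and_or, not_le, not_le] at htIcc
  refine ht ?_
  rcases htIcc with hlt | hgt
  · have h : smoothStepDown =ᶠ[𝓝 t] fun _ => 1 := by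
      filter_upwards [Iio_mem_nhds hlt] with s hs using smoothStepDown_of_le_one (le_of_lt hs)
    simpa using h.deriv_eq
  · have h : smoothStepDown =ᶠ[𝓝 t] fun _ => 0 := by
      filter_upwards [Ioi_mem_nhds hgt] with s hs using smoothStepDown_of_two_le (le_of_lt hs)
    simpa using h.deriv_eq

theorem hasCompactSupport_deriv_smoothStepDown : HasCompactSupport (deriv smoothStepDown) :=
  isCompact_Icc.of_isClosed_subset (isClosed_tsupport _) tsupport_deriv_smoothStepDown_subset

theorem one_le_of_deriv_deriv_smoothStepDown_ne_zero {t : ℝ}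
    (ht : deriv (deriv smoothStepDown) t ≠ 0) : 1 ≤ t :=
  (tsupport_deriv_smoothStepDown_subset (support_deriv_subset ht)).1

theorem integrable_mul_deriv_deriv_smoothStepDown :
    Integrable fun t => t * deriv (deriv smoothStepDown) t :=
  (continuous_id.mul contDiff_smoothStepDown.deriv'.continuous_deriv_one)
    |>.integrable_of_hasCompactSupport hasCompactSupport_deriv_smoothStepDown.deriv.mul_left

theorem integral_mul_deriv_deriv_smoothStepDown :
    ∫ t, t * deriv (deriv smoothStepDown) t = 1 := by
  have hbot : Tendsto smoothStepDown atBot (𝓝 1) := tendsto_const_nhds.congr' <| by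
    filter_upwards [eventually_le_atBot 1] with t ht using (smoothStepDown_of_le_one ht).symm
  have htop : Tendsto smoothStepDown atTop (𝓝 0) := tendsto_const_nhds.congr' <| by
    filter_upwards [eventually_ge_atTop 2] with t ht using (smoothStepDown_of_two_le ht).symm
  simpa using integral_mul_deriv_deriv_of_hasCompactSupport contDiff_smoothStepDown
    hasCompactSupport_deriv_smoothStepDown hbot htop

end SmoothStepDown

section LogCutoff

/-- The logarithmic cutoff at scale `L > 0`: equal to `1` on the ball of radius `exp L`, vanishing
outside the ball of radius `exp (2 * L)`. The convention `log 0 = 0` gives the value `1` at `0`. -/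
def logCutoff (E : Type*) [Norm E] (L : ℝ) (x : E) : ℝ := smoothStepDown (log ‖x‖ / L)

section Norm

variable {E : Type*} [NormedAddCommGroup E] {L : ℝ}

theorem norm_logCutoff_le_one (L : ℝ) (x : E) : ‖logCutoff E L x‖ ≤ 1 :=
  norm_smoothStepDown_le_one _

theorem logCutoff_eq_one (hL : 0 < L) {x : E} (hx : ‖x‖ ≤ exp L) : logCutoff E L x = 1 := by
  refine smoothStepDown_of_le_one ((div_le_one hL).2 ?_)
  rcases (norm_nonneg x).eq_or_lt' with h0 | hpos
  · simpa [h0] using hL.le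
  · exact (log_le_iff_le_exp hpos).2 hx

theorem logCutoff_eq_zero (hL : 0 < L) {x : E} (hx : exp (2 * L) ≤ ‖x‖) : logCutoff E L x = 0 :=
  smoothStepDown_of_two_le ((le_div_iff₀ hL).2 ((le_log_iff_exp_le ((exp_pos _).trans_le hx)).2 hx))

theorem hasCompactSupport_logCutoff [ProperSpace E] (hL : 0 < L) :
    HasCompactSupport (logCutoff E L) :=
  .intro (isCompact_closedBall 0 (exp (2 * L))) fun x hx => logCutoff_eq_zero hL <| by
    simpa using (lt_of_not_ge fun h => hx (by simpa using h)).le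

theorem tendsto_logCutoff_atTop (x : E) : Tendsto (fun L => logCutoff E L x) atTop (𝓝 1) :=
  tendsto_const_nhds.congr' <| by
    filter_upwards [eventually_gt_atTop 0, tendsto_exp_atTop.eventually_ge_atTop ‖x‖] with L hL hx
      using (logCutoff_eq_one hL hx).symm

theorem logCutoff_eventuallyEq_one (hL : 0 < L) : (logCutoff E L) =ᶠ[𝓝 0] fun _ => 1 := by
  filter_upwards [Metric.closedBall_mem_nhds (0 : E) (exp_pos L)] with x hx
  exact logCutoff_eq_one hL (by simpa using hx)

end Norm

variable {E : Type*} [NormedAddCommGroup E] [InnerProductSpace ℝ E] {L : ℝ}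

theorem contDiff_logCutoff (hL : 0 < L) : ContDiff ℝ 2 (logCutoff E L) := by
  refine contDiff_iff_contDiffAt.2 fun x => ?_
  rcases eq_or_ne x 0 with rfl | hx
  · exact contDiffAt_const.congr_of_eventuallyEq (logCutoff_eventuallyEq_one hL)
  · exact contDiff_smoothStepDown.contDiffAt.comp x
      (((contDiffAt_norm ℝ hx).log (norm_ne_zero_iff.2 hx)).div_const L)

variable [FiniteDimensional ℝ E]

theorem laplacian_logCutoff (hE : finrank ℝ E = 2) (hL : 0 < L) (x : E) :
    Δ (logCutoff E L) x = deriv (deriv smoothStepDown) (log ‖x‖ / L) / L ^ 2 / ‖x‖ ^ 2 := by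
  rcases eq_or_ne x 0 with rfl | hx
  · simpa using
      (InnerProductSpace.laplacian_congr_nhds (logCutoff_eventuallyEq_one (E := E) hL)).eq_of_nhds
  · have hderiv (f : ℝ → ℝ) : deriv (fun t => f (t / L)) = fun t => deriv f (t / L) / L := by
      ext t
      simpa [div_eq_inv_mul] using deriv_comp_mul_left L⁻¹ f t
    have hprofile : ContDiff ℝ 2 fun t => smoothStepDown (t / L) :=
      contDiff_smoothStepDown.comp (contDiff_id.div_const L)
    have hlap := laplacian_comp_log_norm hprofile.contDiffAt hx
    simp only [hderiv, deriv_div_const, hE, Nat.cast_ofNat, sub_self, zero_mul, add_zero] at hlap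
    rw [div_div _ L L, ← sq] at hlap
    exact hlap

theorem log_norm_mul_laplacian_logCutoff (hE : finrank ℝ E = 2) (hL : 0 < L) (x : E) :
    log ‖x‖ * Δ (logCutoff E L) x
      = log ‖x‖ / L * deriv (deriv smoothStepDown) (log ‖x‖ / L) / L / ‖x‖ ^ 2 := by
  rw [laplacian_logCutoff hE hL]
  field_simp

theorem exp_le_norm_of_laplacian_logCutoff_ne_zero (hE : finrank ℝ E = 2) (hL : 0 < L) {x : E}
    (hx : Δ (logCutoff E L) x ≠ 0) : exp L ≤ ‖x‖ := by
  rw [laplacian_logCutoff hE hL] at hx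
  have hx0 : 0 < ‖x‖ := norm_pos_iff.2 fun h => hx (by simp [h])
  have hscaled : 1 ≤ log ‖x‖ / L :=
    one_le_of_deriv_deriv_smoothStepDown_ne_zero fun h => hx (by simp [h])
  exact (le_log_iff_exp_le hx0).1 ((one_le_div hL).1 hscaled)

section Integral

variable [MeasurableSpace E] [BorelSpace E]

theorem integral_comp_log_norm_div_div_sq (hE : finrank ℝ E = 2) (hL : 0 < L) (f : ℝ → ℝ) :
    ∫ x : E, f (log ‖x‖ / L) / L / ‖x‖ ^ 2 = 2 * π * ∫ t, f t := by
  have : Nontrivial E := nontrivial_of_finrank_pos (R := ℝ) (by omega)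
  have hdisc : (volume : Measure E).real (Metric.ball 0 1) = π := by
    simp [Measure.real, InnerProductSpace.volume_ball_of_dim_even (k := 1) hE, pi_nonneg]
  have hpolar := integral_comp_log_norm_div_pow_finrank (volume : Measure E) fun t => f (t / L) / L
  rw [hE, hdisc, integral_div, Measure.integral_comp_div, abs_of_pos hL, smul_eq_mul,
    mul_div_cancel_left₀ _ hL.ne'] at hpolar
  exact hpolar

theorem integrable_comp_log_norm_div_div_sq (hE : finrank ℝ E = 2) (hL : 0 < L) {f : ℝ → ℝ}
    (hf : Integrable f) : Integrable fun x : E => f (log ‖x‖ / L) / L / ‖x‖ ^ 2 := by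
  have : Nontrivial E := nontrivial_of_finrank_pos (R := ℝ) (by omega)
  rw [← hE, integrable_comp_log_norm_div_pow_finrank_iff volume (f := fun t => f (t / L) / L)]
  exact (hf.comp_div hL.ne').div_const L

theorem integrable_log_norm_mul_laplacian_logCutoff (hE : finrank ℝ E = 2) (hL : 0 < L) :
    Integrable fun x : E => log ‖x‖ * Δ (logCutoff E L) x := by
  simp only [log_norm_mul_laplacian_logCutoff hE hL]
  exact integrable_comp_log_norm_div_div_sq hE hL integrable_mul_deriv_deriv_smoothStepDown

theorem integral_log_norm_mul_laplacian_logCutoff (hE : finrank ℝ E = 2) (hL : 0 < L) :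
    ∫ x : E, log ‖x‖ * Δ (logCutoff E L) x = 2 * π := by
  simp only [log_norm_mul_laplacian_logCutoff hE hL]
  rw [integral_comp_log_norm_div_div_sq hE hL fun t => t * deriv (deriv smoothStepDown) t,
    integral_mul_deriv_deriv_smoothStepDown, mul_one]

theorem integral_norm_log_norm_mul_laplacian_logCutoff (hE : finrank ℝ E = 2) (hL : 0 < L) :
    ∫ x : E, ‖log ‖x‖ * Δ (logCutoff E L) x‖
      = 2 * π * ∫ t, ‖t * deriv (deriv smoothStepDown) t‖ := by
  rw [← integral_comp_log_norm_div_div_sq (E := E) hE hL]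
  simp only [log_norm_mul_laplacian_logCutoff hE hL, norm_div, norm_pow, norm_norm,
    norm_of_nonneg hL.le]

theorem tendsto_integral_mul_laplacian_logCutoff_of_isLittleO (hE : finrank ℝ E = 2) {v : E → ℝ}
    (hv : v =o[cobounded E] fun x => log ‖x‖) :
    Tendsto (fun L => ∫ x, v x * Δ (logCutoff E L) x) atTop (𝓝 0) := by
  refine IsLittleO.tendsto_zero_of_tendsto (isLittleO_iff.2 fun ε hε => ?_)
    (tendsto_const_nhds (x := 2 * π * ∫ t, ‖t * deriv (deriv smoothStepDown) t‖))
  obtain ⟨R, -, hR⟩ := hasBasis_cobounded_norm.eventually_iff.1 (isLittleO_iff.1 hv hε)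
  filter_upwards [eventually_gt_atTop 0, tendsto_exp_atTop.eventually_ge_atTop R] with L hL hRL
  have hbound (x : E) : ‖v x * Δ (logCutoff E L) x‖ ≤ ε * ‖log ‖x‖ * Δ (logCutoff E L) x‖ := by
    rcases eq_or_ne (Δ (logCutoff E L) x) 0 with h0 | hne
    · simp [h0]
    · rw [norm_mul, norm_mul, ← mul_assoc]
      gcongr
      exact hR (hRL.trans (exp_le_norm_of_laplacian_logCutoff_ne_zero hE hL hne))
  calc ‖∫ x, v x * Δ (logCutoff E L) x‖ ≤ ∫ x : E, ε * ‖log ‖x‖ * Δ (logCutoff E L) x‖ :=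
        norm_integral_le_of_norm_le
          ((integrable_log_norm_mul_laplacian_logCutoff hE hL).norm.const_mul ε)
          (.of_forall hbound)
    _ = ε * (2 * π * ∫ t, ‖t * deriv (deriv smoothStepDown) t‖) := by
        rw [integral_const_mul, integral_norm_log_norm_mul_laplacian_logCutoff hE hL]
    _ ≤ ε * ‖2 * π * ∫ t, ‖t * deriv (deriv smoothStepDown) t‖‖ := by
        gcongr
        exact le_norm_self _

theorem tendsto_integral_mul_logCutoff {f : E → ℝ} (hf : Integrable f) :
    Tendsto (fun L => ∫ x, f x * logCutoff E L x) atTop (𝓝 (∫ x, f x)) := by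
  refine tendsto_integral_filter_of_dominated_convergence (fun x => ‖f x‖) ?_ ?_ hf.norm ?_
  · filter_upwards [eventually_gt_atTop 0] with L hL
    exact hf.aestronglyMeasurable.mul (contDiff_logCutoff hL).continuous.aestronglyMeasurable
  · refine .of_forall fun L => .of_forall fun x => ?_
    rw [norm_mul]
    exact mul_le_of_le_one_right (norm_nonneg _) (norm_logCutoff_le_one L x)
  · refine .of_forall fun x => ?_
    simpa using (tendsto_logCutoff_atTop x).const_mul (f x)

end Integral

end LogCutoff

section LogarithmicGrowth

variable {E : Type*} [NormedAddCommGroup E] [InnerProductSpace ℝ E] [FiniteDimensional ℝ E]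
  [MeasurableSpace E] [BorelSpace E] {u : E → ℝ} {α : ℝ}

theorem tendsto_integral_mul_laplacian_logCutoff (hE : finrank ℝ E = 2) (hu : Continuous u)
    (hlog : (fun x => u x - α * log ‖x‖) =o[cobounded E] fun x => log ‖x‖) :
    Tendsto (fun L => ∫ x, u x * Δ (logCutoff E L) x) atTop (𝓝 (2 * π * α)) := by
  have hlim : Tendsto (fun L => (∫ x, (u x - α * log ‖x‖) * Δ (logCutoff E L) x) + α * (2 * π))
      atTop (𝓝 (2 * π * α)) := by
    simpa [mul_comm] using
      (tendsto_integral_mul_laplacian_logCutoff_of_isLittleO hE hlog).add_const (α * (2 * π))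
  refine hlim.congr' ?_
  filter_upwards [eventually_gt_atTop 0] with L hL
  have hφ : ContDiff ℝ 2 (logCutoff E L) := contDiff_logCutoff hL
  have huint : Integrable fun x => u x * Δ (logCutoff E L) x :=
    (hu.mul (continuous_laplacian hφ)).integrable_of_hasCompactSupport
      (hasCompactSupport_laplacian (hasCompactSupport_logCutoff hL)).mul_left
  have hlogint := (integrable_log_norm_mul_laplacian_logCutoff (E := E) hE hL).const_mul α
  simp only [sub_mul, mul_assoc]
  rw [integral_sub huint hlogint, integral_const_mul,
    integral_log_norm_mul_laplacian_logCutoff hE hL, sub_add_cancel]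

theorem integral_laplacian_eq_two_pi_mul (hE : finrank ℝ E = 2) (hu : ContDiff ℝ 2 u)
    (hint : Integrable (Δ u))
    (hlog : (fun x => u x - α * log ‖x‖) =o[cobounded E] fun x => log ‖x‖) :
    ∫ x, Δ u x = 2 * π * α := by
  refine tendsto_nhds_unique (tendsto_integral_mul_logCutoff hint) <|
    (tendsto_integral_mul_laplacian_logCutoff hE hu.continuous hlog).congr' ?_
  filter_upwards [eventually_gt_atTop 0] with L hL
  exact (integral_laplacian_mul_of_hasCompactSupport hu (contDiff_logCutoff hL)
    (hasCompactSupport_logCutoff hL)).symm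

end LogarithmicGrowth

section Growth

variable {E : Type*} [NormedAddCommGroup E] {u : E → ℝ} {α β : ℝ}

theorem tendsto_log_norm_cobounded_atTop :
    Tendsto (fun x : E => log ‖x‖) (cobounded E) atTop :=
  tendsto_log_atTop.comp tendsto_norm_cobounded_atTop

theorem isLittleO_log_norm_of_bounded {v : E → ℝ} {C R : ℝ} (hv : ∀ x, R ≤ ‖x‖ → |v x| ≤ C) :
    v =o[cobounded E] fun x => log ‖x‖ := by
  have hbdd : v =O[cobounded E] fun _ => (1 : ℝ) := by
    refine .of_bound C ?_
    filter_upwards [tendsto_norm_cobounded_atTop.eventually_ge_atTop R] with x hx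
    simpa using hv x hx
  exact hbdd.trans_isLittleO (isLittleO_const_left.2 (.inr
    (tendsto_norm_atTop_atTop.comp tendsto_log_norm_cobounded_atTop)))

theorem isTheta_norm_one_add_norm :
    (fun x : E => ‖x‖) =Θ[cobounded E] fun x => 1 + ‖x‖ := by
  have h : (fun _ : E => (1 : ℝ)) =o[cobounded E] fun x => ‖x‖ :=
    isLittleO_const_left.2 (.inr (tendsto_norm_atTop_atTop.comp tendsto_norm_cobounded_atTop))
  exact h.right_isTheta_add

theorem exp_two_mul_isBigO_one_add_norm_rpow
    (hlog : (fun x => u x - α * log ‖x‖) =o[cobounded E] fun x => log ‖x‖) (hαβ : α < β) :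
    (fun x => exp (2 * u x)) =O[cobounded E] fun x => (1 + ‖x‖) ^ (2 * β) := by
  have hle : ∀ᶠ x in cobounded E, exp (2 * u x) ≤ ‖x‖ ^ (2 * β) := by
    filter_upwards [isLittleO_iff.1 hlog (sub_pos.2 hαβ),
      tendsto_norm_cobounded_atTop.eventually_gt_atTop 1] with x hx hx1
    have hlogpos : 0 < log ‖x‖ := log_pos hx1
    rw [norm_of_nonneg hlogpos.le] at hx
    rw [rpow_def_of_pos (by linarith), exp_le_exp]
    linarith [le_norm_self (u x - α * log ‖x‖)]
  have hrpow : (fun x : E => ‖x‖ ^ (2 * β)) =O[cobounded E] fun x => (1 + ‖x‖) ^ (2 * β) :=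
    (isTheta_norm_one_add_norm.rpow (.of_forall fun x => norm_nonneg x)
      (.of_forall fun x => by positivity)).1
  refine (IsBigO.of_norm_eventuallyLE ?_).trans hrpow
  filter_upwards [hle] with x hx
  simpa using hx

theorem integrable_mul_exp_two_mul [ProperSpace E] [MeasurableSpace E] [BorelSpace E]
    {μ : Measure E} {K : E → ℝ} (hloc : LocallyIntegrable (fun x => K x * exp (2 * u x)) μ)
    (hlog : (fun x => u x - α * log ‖x‖) =o[cobounded E] fun x => log ‖x‖) (hαβ : α < β)
    (hK : Integrable (fun x => |K x| * (1 + ‖x‖) ^ (2 * β)) μ) :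
    Integrable (fun x => K x * exp (2 * u x)) μ := by
  have hbigO : (fun x => K x * exp (2 * u x)) =O[cobounded E]
      fun x => |K x| * (1 + ‖x‖) ^ (2 * β) :=
    (isBigO_refl K _).abs_right.mul (exp_two_mul_isBigO_one_add_norm_rpow hlog hαβ)
  exact hloc.integrable_of_isBigO_cocompact (Metric.cobounded_eq_cocompact (α := E) ▸ hbigO)
    (hK.integrableAtFilter _)

end Growth

theorem stmt18_general {K u : E2 → ℝ} {α β : ℝ} (hαβ : α < β)
    (hK : Integrable fun x => |K x| * (1 + ‖x‖) ^ (2 * β)) (hu : ContDiff ℝ 2 u)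
    (heq : ∀ x, lap u x + K x * exp (2 * u x) = 0)
    (hlog : (fun x => u x - α * log ‖x‖) =o[cobounded E2] fun x => log ‖x‖) :
    ∫ x, K x * exp (2 * u x) = -(2 * α * π) := by
  have hlap : Δ u = fun x => -(K x * exp (2 * u x)) :=
    (lap_eq_laplacian hu).symm.trans (funext fun x => eq_neg_of_add_eq_zero_left (heq x))
  have hcont : Continuous fun x => K x * exp (2 * u x) := by
    simpa [hlap, Pi.neg_def] using (continuous_laplacian hu).neg
  have hint := integrable_mul_exp_two_mul hcont.locallyIntegrable hlog hαβ hK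
  have htotal := integral_laplacian_eq_two_pi_mul (by simp) hu (hlap ▸ hint.neg) hlog
  rw [hlap, integral_neg] at htotal
  linarith

theorem stmt18 (K : E2 → ℝ) (hmeas : Measurable K) (hK : ∀ x, K x ≤ 0)
    (hloc : ∀ R : ℝ, ∃ M : ℝ, ∀ x : E2, ‖x‖ ≤ R → |K x| ≤ M)
    (α : ℝ) (hα : 0 < α)
    (hα1 : ∃ β : ℝ, α < β ∧ Integrable (fun x : E2 => |K x| * (1 + ‖x‖) ^ (2*β)))
    (u : E2 → ℝ) (hu : ContDiff ℝ 2 u)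
    (heq : ∀ x, lap u x + K x * exp (2 * u x) = 0)
    (hb : ∃ C : ℝ, ∀ x : E2, 1 ≤ ‖x‖ → |u x - α * log ‖x‖| ≤ C) :
    ∫ x : E2, K x * exp (2 * u x) = -(2*α*π) := by
  obtain ⟨β, hαβ, hKβ⟩ := hα1
  exact stmt18_general hαβ hKβ hu heq (isLittleO_log_norm_of_bounded hb.choose_spec)
end
end
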